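/- Let A be a DGA over ℚ with a cochain choice (α, γ). Let x₁, x₂, x₃, x₄, x₅ ∈ H² satisfy x_i x_{i+1} = 0 in H⁴ for all i ∈ ℤ/5 (indices mod 5), so that each product x_i x_{i+1} ∈ P²H² lies in E. Write α_i = α(x_i) ∈ Z² and γ_{i,i+1} = γ(x_i x_{i+1}) ∈ A³, so dγ_{i,i+1} = α_i α_{i+1}. Suppose σ₁, σ₂ ∈ A⁴ satisfy dσ₁ = α₁γ₂₃ − γ₁₂α₃ and dσ₂ = α₂γ₃₄ − γ₂₃α₄. Then the element c = α₁σ₂ − γ₁₂γ₃₄ + σ₁α₄ ∈ A⁶ is closed, and in H⁸ one has [c · α₅] = −[ Σ_{i ∈ ℤ/5} α_i γ_{i+1,i+2} γ_{i+3,i+4} ]; the class on the right equals the evaluation of the map induced by αγ² on ⋆(x₁, x₂, x₃, x₄, x₅) ∈ D. (The class [c] is a representative of the fourfold Massey product ⟨x₁, x₂, x₃, x₄⟩, up to sign convention; this is Proposition 3.17 of the paper, expressing fourfold Massey products in terms of the pentagonal Massey tensor.) -/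

import Mathlib

/-!
Common constructions: for a `ℚ`-vector space `V`, the symmetric powers
`P²V, P³V, P⁴V, P⁵V` (as `SqM V`, `CubM V`, `QuarM V`, `QuinM V`), built as iterated
quotients of tensor products, with the multiplication maps between them; the exterior
square `Λ²W` (as `AltM W`) with the wedge map; and the 5-linear map `⋆` (as `star5`).
-/

open TensorProduct

noncomputable section

variable (V W : Type) [AddCommGroup V] [Module ℚ V] [AddCommGroup W] [Module ℚ W]

/-- The relations defining the symmetric square `P²V` as a quotient of `V ⊗ V`. -/
def sqRel : Submodule ℚ (V ⊗[ℚ] V) :=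
  Submodule.span ℚ {z | ∃ x y : V, z = x ⊗ₜ[ℚ] y - y ⊗ₜ[ℚ] x}

/-- The symmetric square `P²V`. -/
abbrev SqM : Type := (V ⊗[ℚ] V) ⧸ sqRel V

/-- The product `V × V → P²V`, `(x, y) ↦ xy`. -/
def sqm : V →ₗ[ℚ] V →ₗ[ℚ] SqM V :=
  (TensorProduct.mk ℚ V V).compr₂ (sqRel V).mkQ

/-- The relations presenting the symmetric cube `P³V` as a quotient of `V ⊗ P²V`. -/
def cubRel : Submodule ℚ (V ⊗[ℚ] SqM V) :=
  Submodule.span ℚ {z | ∃ x y w : V, z = x ⊗ₜ[ℚ] sqm V y w - y ⊗ₜ[ℚ] sqm V x w}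

/-- The symmetric cube `P³V`. -/
abbrev CubM : Type := (V ⊗[ℚ] SqM V) ⧸ cubRel V

/-- The product `V × P²V → P³V`. -/
def mulC : V →ₗ[ℚ] SqM V →ₗ[ℚ] CubM V :=
  (TensorProduct.mk ℚ V (SqM V)).compr₂ (cubRel V).mkQ

/-- The relations presenting `P⁴V` as a quotient of `V ⊗ P³V`. -/
def quarRel : Submodule ℚ (V ⊗[ℚ] CubM V) :=
  Submodule.span ℚ {z | ∃ (x y : V) (u : SqM V), z = x ⊗ₜ[ℚ] mulC V y u - y ⊗ₜ[ℚ] mulC V x u}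

/-- The symmetric fourth power `P⁴V`. -/
abbrev QuarM : Type := (V ⊗[ℚ] CubM V) ⧸ quarRel V

/-- The product `V × P³V → P⁴V`. -/
def mulQ : V →ₗ[ℚ] CubM V →ₗ[ℚ] QuarM V :=
  (TensorProduct.mk ℚ V (CubM V)).compr₂ (quarRel V).mkQ

/-- The relations presenting `P⁵V` as a quotient of `V ⊗ P⁴V`. -/
def quinRel : Submodule ℚ (V ⊗[ℚ] QuarM V) :=
  Submodule.span ℚ {z | ∃ (x y : V) (c : CubM V), z = x ⊗ₜ[ℚ] mulQ V y c - y ⊗ₜ[ℚ] mulQ V x c}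

/-- The symmetric fifth power `P⁵V`. -/
abbrev QuinM : Type := (V ⊗[ℚ] QuarM V) ⧸ quinRel V

/-- The product `V × P⁴V → P⁵V`. -/
def mulQn : V →ₗ[ℚ] QuarM V →ₗ[ℚ] QuinM V :=
  (TensorProduct.mk ℚ V (QuarM V)).compr₂ (quinRel V).mkQ

/-- The relations defining the exterior square `Λ²W` as a quotient of `W ⊗ W`. -/
def altRel2 : Submodule ℚ (W ⊗[ℚ] W) :=
  Submodule.span ℚ {z | ∃ x : W, z = x ⊗ₜ[ℚ] x}

/-- The exterior square `Λ²W`. -/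
abbrev AltM : Type := (W ⊗[ℚ] W) ⧸ altRel2 W

/-- The wedge product `W × W → Λ²W`. -/
def wdg : W →ₗ[ℚ] W →ₗ[ℚ] AltM W :=
  (TensorProduct.mk ℚ W W).compr₂ (altRel2 W).mkQ

/-- The element `⋆(x₁,…,x₅) = Σ_{i ∈ ℤ/5} xᵢ ⊗ (x_{i+1}x_{i+2} ∧ x_{i+3}x_{i+4})`
of `V ⊗ Λ²(P²V)`. -/
def star5 (x₁ x₂ x₃ x₄ x₅ : V) : V ⊗[ℚ] AltM (SqM V) :=
    x₁ ⊗ₜ[ℚ] wdg (SqM V) (sqm V x₂ x₃) (sqm V x₄ x₅)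
  + x₂ ⊗ₜ[ℚ] wdg (SqM V) (sqm V x₃ x₄) (sqm V x₅ x₁)
  + x₃ ⊗ₜ[ℚ] wdg (SqM V) (sqm V x₄ x₅) (sqm V x₁ x₂)
  + x₄ ⊗ₜ[ℚ] wdg (SqM V) (sqm V x₅ x₁) (sqm V x₂ x₃)
  + x₅ ⊗ₜ[ℚ] wdg (SqM V) (sqm V x₁ x₂) (sqm V x₃ x₄)

/-- A differential graded algebra (DGA) over `ℚ`: an `ℕ`-graded, graded-commutative,
associative unital `ℚ`-algebra with a degree `+1` differential satisfying `d ∘ d = 0`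
and the graded Leibniz rule. -/
structure DGA where
  /-- The underlying type. -/
  carrier : Type
  [ringStr : Ring carrier]
  [algStr : Algebra ℚ carrier]
  /-- The grading `A = ⊕ᵢ Aⁱ`. -/
  grading : ℕ → Submodule ℚ carrier
  one_mem : (1 : carrier) ∈ grading 0
  mul_mem : ∀ {i j : ℕ} {a b : carrier}, a ∈ grading i → b ∈ grading j → a * b ∈ grading (i + j)
  /-- The grading really is a direct sum decomposition. -/
  internal : DirectSum.IsInternal grading
  /-- Graded commutativity. -/
  gcomm : ∀ {i j : ℕ} {a b : carrier}, a ∈ grading i → b ∈ grading j →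
    a * b = ((-1 : ℚ) ^ (i * j)) • (b * a)
  /-- The differential. -/
  d : carrier →ₗ[ℚ] carrier
  d_mem : ∀ {i : ℕ} {a : carrier}, a ∈ grading i → d a ∈ grading (i + 1)
  d_d : ∀ a : carrier, d (d a) = 0
  /-- The graded Leibniz rule. -/
  leibniz : ∀ {i : ℕ} {a : carrier} (b : carrier), a ∈ grading i →
    d (a * b) = d a * b + ((-1 : ℚ) ^ i) • (a * d b)

attribute [instance] DGA.ringStr DGA.algStr

namespace DGA

variable (A : DGA)

/-- The closed elements of degree `i`. -/
def Z (i : ℕ) : Submodule ℚ A.carrier := A.grading i ⊓ LinearMap.ker A.d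

/-- The exact elements of degree `i`, as a submodule of the closed ones. -/
def Bdry (i : ℕ) : Submodule ℚ (A.Z i) :=
  Submodule.comap (A.Z i).subtype (Submodule.map A.d (A.grading (i - 1)))

/-- Degree `i` cohomology of the DGA. -/
abbrev H (i : ℕ) : Type := A.Z i ⧸ A.Bdry i

/-- The projection from closed elements to cohomology classes. -/
def pr (i : ℕ) : A.Z i →ₗ[ℚ] A.H i := (A.Bdry i).mkQ

end DGA

/-!
In the symmetric algebra `x_{i+2} · xᵢx_{i+1} = xᵢ · x_{i+1}x_{i+2}`, so shifting the index by `2`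
matches the negative terms of `m(⋆(x₁,…,x₅))` with the positive ones.

The cochain `γ₅₁σ₂ + σ₁γ₄₅` is a primitive of `c·α₅ + Σᵢ αᵢγ_{i+1,i+2}γ_{i+3,i+4}`. Its differential
is `α₅α₁σ₂ - γ₅₁(α₂γ₃₄ - γ₂₃α₄) + (α₁γ₂₃ - γ₁₂α₃)γ₄₅ + σ₁α₄α₅`: the outer two terms are those of
`c·α₅` except `-γ₁₂γ₃₄α₅`, the inner ones those of the sum except `α₅γ₁₂γ₃₄`, and these two
exceptions cancel because even elements are central.
-/

section SymmetricPowers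

variable {V}

theorem sqm_comm (x y : V) : sqm V x y = sqm V y x :=
  (Submodule.Quotient.eq _).2 (Submodule.subset_span ⟨x, y, rfl⟩)

theorem mulC_sqm_left_comm (x y z : V) : mulC V x (sqm V y z) = mulC V y (sqm V x z) :=
  (Submodule.Quotient.eq _).2 (Submodule.subset_span ⟨x, y, z, rfl⟩)

theorem mulC_sqm_rotate (x y z : V) : mulC V z (sqm V x y) = mulC V x (sqm V y z) := by
  rw [mulC_sqm_left_comm, sqm_comm z y]

theorem star5_eq_sum (x : Fin 5 → V) :
    star5 V (x 1) (x 2) (x 3) (x 4) (x 0) =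
      ∑ i, x i ⊗ₜ[ℚ]
        wdg (SqM V) (sqm V (x (i + 1)) (x (i + 2))) (sqm V (x (i + 3)) (x (i + 4))) := by
  rw [Fin.sum_univ_succ, add_comm, Fin.sum_univ_four]
  rfl

theorem map_star5_eq_zero (m : (V ⊗[ℚ] AltM (SqM V)) →ₗ[ℚ] (CubM V ⊗[ℚ] SqM V))
    (hm : ∀ (q : V) (u v : SqM V),
      m (q ⊗ₜ[ℚ] wdg (SqM V) u v) = mulC V q u ⊗ₜ[ℚ] v - mulC V q v ⊗ₜ[ℚ] u)
    (x₁ x₂ x₃ x₄ x₅ : V) : m (star5 V x₁ x₂ x₃ x₄ x₅) = 0 := by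
  let x : Fin 5 → V := ![x₅, x₁, x₂, x₃, x₄]
  let positive (i : Fin 5) : CubM V ⊗[ℚ] SqM V :=
    mulC V (x i) (sqm V (x (i + 1)) (x (i + 2))) ⊗ₜ[ℚ] sqm V (x (i + 3)) (x (i + 4))
  let negative (i : Fin 5) : CubM V ⊗[ℚ] SqM V :=
    mulC V (x i) (sqm V (x (i + 3)) (x (i + 4))) ⊗ₜ[ℚ] sqm V (x (i + 1)) (x (i + 2))
  have negative_shift (i : Fin 5) : negative (i + 2) = positive i := by
    simp only [negative, positive, add_assoc, Fin.reduceAdd, add_zero, mulC_sqm_rotate]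
  calc m (star5 V x₁ x₂ x₃ x₄ x₅) = ∑ i, (positive i - negative i) := by
        rw [show star5 V x₁ x₂ x₃ x₄ x₅ = _ from star5_eq_sum x, map_sum]
        exact Finset.sum_congr rfl fun i _ => hm _ _ _
    _ = ∑ i, positive i - ∑ i, negative (i + 2) := by
        rw [Finset.sum_sub_distrib, ← Equiv.sum_comp (Equiv.addRight 2) negative]
        rfl
    _ = 0 := by simp only [negative_shift, sub_self]

end SymmetricPowers

namespace DGA

variable {A : DGA} {a b : A.carrier}

variable (A) in
/-- The homogeneous elements of even degree. The sign rules for cochains depend only on parity, so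
the degree itself is not recorded. -/
def IsEven (a : A.carrier) : Prop := ∃ i, Even i ∧ a ∈ A.grading i

variable (A) in
/-- The homogeneous elements of odd degree, the counterpart of `IsEven`. -/
def IsOdd (a : A.carrier) : Prop := ∃ i, Odd i ∧ a ∈ A.grading i

theorem IsEven.commute (ha : A.IsEven a) (b : A.carrier) : Commute a b := by
  obtain ⟨i, hi, ha⟩ := ha
  have hb : b ∈ ⨆ j, A.grading j := A.internal.submodule_iSup_eq_top ▸ Submodule.mem_top
  induction hb using Submodule.iSup_induction' with
  | mem j b hb => rw [Commute, SemiconjBy, A.gcomm ha hb, (hi.mul_right j).neg_one_pow, one_smul]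
  | zero => exact Commute.zero_right a
  | add b c _ _ hb hc => exact hb.add_right hc

theorem IsOdd.anticommute (ha : A.IsOdd a) (hb : A.IsOdd b) : a * b = -(b * a) := by
  obtain ⟨i, hi, ha⟩ := ha
  obtain ⟨j, hj, hb⟩ := hb
  rw [A.gcomm ha hb, (hi.mul hj).neg_one_pow, neg_one_smul]

theorem IsEven.d_mul (ha : A.IsEven a) (b : A.carrier) : A.d (a * b) = A.d a * b + a * A.d b := by
  obtain ⟨i, hi, ha⟩ := ha
  rw [A.leibniz b ha, hi.neg_one_pow, one_smul]

theorem IsOdd.d_mul (ha : A.IsOdd a) (b : A.carrier) : A.d (a * b) = A.d a * b - a * A.d b := by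
  obtain ⟨i, hi, ha⟩ := ha
  rw [A.leibniz b ha, hi.neg_one_pow, neg_one_smul, sub_eq_add_neg]

theorem mul_mem_Z {i j : ℕ} (ha : a ∈ A.Z i) (hb : b ∈ A.Z j) : a * b ∈ A.Z (i + j) := by
  refine ⟨A.mul_mem ha.1 hb.1, ?_⟩
  have hda : A.d a = 0 := ha.2
  have hdb : A.d b = 0 := hb.2
  change A.d (a * b) = 0
  rw [A.leibniz b ha.1, hda, hdb, zero_mul, mul_zero, smul_zero, add_zero]

/-- The cochain representing the fourfold Massey product `⟨a₁, a₂, a₃, a₄⟩` for the defining system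
`(g₁₂, g₂₃, g₃₄, s₁, s₂)`, where `d gᵢⱼ = aᵢaⱼ`, `d s₁ = a₁g₂₃ - g₁₂a₃` and
`d s₂ = a₂g₃₄ - g₂₃a₄`. The sign convention is the one suited to even `aᵢ`. -/
def masseyCocycle (a₁ a₄ g₁₂ g₃₄ s₁ s₂ : A.carrier) : A.carrier :=
  a₁ * s₂ - g₁₂ * g₃₄ + s₁ * a₄

theorem d_masseyCocycle_eq_zero {a₁ a₂ a₃ a₄ g₁₂ g₂₃ g₃₄ s₁ s₂ : A.carrier}
    (ha₁ : A.IsEven a₁) (hg₁₂ : A.IsOdd g₁₂) (hs₁ : A.IsEven s₁)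
    (da₁ : A.d a₁ = 0) (da₄ : A.d a₄ = 0)
    (dg₁₂ : A.d g₁₂ = a₁ * a₂) (dg₃₄ : A.d g₃₄ = a₃ * a₄)
    (ds₁ : A.d s₁ = a₁ * g₂₃ - g₁₂ * a₃) (ds₂ : A.d s₂ = a₂ * g₃₄ - g₂₃ * a₄) :
    A.d (masseyCocycle a₁ a₄ g₁₂ g₃₄ s₁ s₂) = 0 := by
  rw [masseyCocycle, map_add, map_sub, ha₁.d_mul, hg₁₂.d_mul, hs₁.d_mul, da₁, da₄, dg₁₂, dg₃₄,
    ds₁, ds₂]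
  noncomm_ring

/-- The cochain `Σ_{i ∈ ℤ/5} aᵢ g_{i+1,i+2} g_{i+3,i+4}` of the pentagonal Massey tensor, with
indices modulo five (so `a 0` is `a₅`) and `g i` standing for `g_{i,i+1}`. -/
def pentagonSum (a g : Fin 5 → A.carrier) : A.carrier :=
  ∑ i, a i * (g (i + 1) * g (i + 3))

theorem pentagonSum_eq_add (a g : Fin 5 → A.carrier) :
    pentagonSum a g = a 1 * (g 2 * g 4) + a 2 * (g 3 * g 0) + a 3 * (g 4 * g 1)
      + a 4 * (g 0 * g 2) + a 0 * (g 1 * g 3) := by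
  rw [pentagonSum, Fin.sum_univ_succ, add_comm, Fin.sum_univ_four]
  rfl

theorem d_eq_masseyCocycle_mul_add_pentagonSum {a g : Fin 5 → A.carrier} {s₁ s₂ : A.carrier}
    (ha : ∀ i, A.IsEven (a i)) (hg : ∀ i, A.IsOdd (g i)) (hs₁ : A.IsEven s₁)
    (dg : ∀ i, A.d (g i) = a i * a (i + 1))
    (ds₁ : A.d s₁ = a 1 * g 2 - g 1 * a 3) (ds₂ : A.d s₂ = a 2 * g 3 - g 2 * a 4) :
    A.d (g 0 * s₂ + s₁ * g 4) =
      masseyCocycle (a 1) (a 4) (g 1) (g 3) s₁ s₂ * a 0 + pentagonSum a g := by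
  have term₂ : g 0 * (a 2 * g 3) = -(a 2 * (g 3 * g 0)) := by
    rw [← mul_assoc, ← (ha 2).commute, mul_assoc, (hg 0).anticommute (hg 3), mul_neg]
  have term₃ : g 1 * a 3 * g 4 = -(a 3 * (g 4 * g 1)) := by
    rw [← (ha 3).commute, mul_assoc, (hg 1).anticommute (hg 4), mul_neg]
  have term₄ : g 0 * (g 2 * a 4) = a 4 * (g 0 * g 2) := by
    rw [← mul_assoc, (ha 4).commute]
  have term₅ : g 1 * g 3 * a 0 = a 0 * (g 1 * g 3) := ((ha 0).commute _).symm.eq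
  have outer : a 1 * s₂ * a 0 = a 0 * a 1 * s₂ := by rw [← (ha 0).commute, mul_assoc]
  calc A.d (g 0 * s₂ + s₁ * g 4)
      = a 0 * a 1 * s₂ - g 0 * (a 2 * g 3 - g 2 * a 4)
          + ((a 1 * g 2 - g 1 * a 3) * g 4 + s₁ * (a 4 * a 0)) := by
        rw [map_add, (hg 0).d_mul, hs₁.d_mul, ds₁, ds₂, dg, dg]
        rfl
    _ = a 0 * a 1 * s₂ + s₁ * a 4 * a 0 + (a 1 * (g 2 * g 4) + a 2 * (g 3 * g 0)
          + a 3 * (g 4 * g 1) + a 4 * (g 0 * g 2)) := by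
        rw [mul_sub, sub_mul, term₂, term₃, term₄, mul_assoc (a 1), mul_assoc s₁]
        abel
    _ = masseyCocycle (a 1) (a 4) (g 1) (g 3) s₁ s₂ * a 0 + pentagonSum a g := by
        rw [pentagonSum_eq_add, masseyCocycle, add_mul, sub_mul, outer, term₅]
        abel

end DGA

/-- **Proposition 3.17 (fourfold Massey products from `𝒫`).** Let `A` be a DGA over `ℚ`
with a cochain choice `(α, γ)`, and let `x₁, …, x₅ ∈ H²` satisfy `xᵢx_{i+1} = 0 ∈ H⁴`
for `i ∈ ℤ/5` (so each `xᵢx_{i+1} ∈ E`). Set `αᵢ = α(xᵢ)`, `γ_{i,i+1} = γ(xᵢx_{i+1})`,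
and let `σ₁, σ₂ ∈ A⁴` satisfy `dσ₁ = α₁γ₂₃ − γ₁₂α₃`, `dσ₂ = α₂γ₃₄ − γ₂₃α₄`. Then
`c = α₁σ₂ − γ₁₂γ₃₄ + σ₁α₄ ∈ A⁶` is closed, and in `H⁸`,
`[c·α₅] = −[Σ_{i ∈ ℤ/5} αᵢ γ_{i+1,i+2} γ_{i+3,i+4}]`, where the class on the right is
the evaluation of the map induced by `αγ²` on `⋆(x₁,…,x₅) ∈ D`. -/
theorem massey_product_from_P (A : DGA)
    (cup : SqM (A.H 2) →ₗ[ℚ] A.H 4)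
    (hcup : ∀ (x y : A.Z 2) (w : A.Z 4),
      (w : A.carrier) = (x : A.carrier) * (y : A.carrier) →
      cup (sqm (A.H 2) (A.pr 2 x) (A.pr 2 y)) = A.pr 4 w)
    (m : (A.H 2 ⊗[ℚ] AltM (SqM (A.H 2))) →ₗ[ℚ] (CubM (A.H 2) ⊗[ℚ] SqM (A.H 2)))
    (hm : ∀ (q : A.H 2) (u v : SqM (A.H 2)),
      m (q ⊗ₜ[ℚ] wdg (SqM (A.H 2)) u v)
        = mulC (A.H 2) q u ⊗ₜ[ℚ] v - mulC (A.H 2) q v ⊗ₜ[ℚ] u)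
    (ι : (A.H 2 ⊗[ℚ] AltM ↥(LinearMap.ker cup)) →ₗ[ℚ] (A.H 2 ⊗[ℚ] AltM (SqM (A.H 2))))
    (hι : ∀ (q : A.H 2) (e e' : ↥(LinearMap.ker cup)),
      ι (q ⊗ₜ[ℚ] wdg ↥(LinearMap.ker cup) e e')
        = q ⊗ₜ[ℚ] wdg (SqM (A.H 2)) (e : SqM (A.H 2)) (e' : SqM (A.H 2)))
    (α : A.H 2 →ₗ[ℚ] A.Z 2) (hα : ∀ h, A.pr 2 (α h) = h)
    (αsq : SqM (A.H 2) →ₗ[ℚ] A.Z 4)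
    (hαsq : ∀ (x y : A.H 2) (w : A.Z 4),
      (w : A.carrier) = (α x : A.carrier) * (α y : A.carrier) →
      αsq (sqm (A.H 2) x y) = w)
    (γ : ↥(LinearMap.ker cup) →ₗ[ℚ] A.carrier)
    (hγmem : ∀ e, γ e ∈ A.grading 3)
    (hγd : ∀ e : ↥(LinearMap.ker cup), A.d (γ e) = (αsq (e : SqM (A.H 2)) : A.carrier))
    (Φ : (A.H 2 ⊗[ℚ] AltM ↥(LinearMap.ker cup)) →ₗ[ℚ] A.carrier)
    (hΦ : ∀ (q : A.H 2) (e e' : ↥(LinearMap.ker cup)),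
      Φ (q ⊗ₜ[ℚ] wdg ↥(LinearMap.ker cup) e e') = (α q : A.carrier) * (γ e * γ e'))
    -- the classes `x₁, …, x₅` with vanishing consecutive products `xᵢx_{i+1} ∈ E`
    (x₁ x₂ x₃ x₄ x₅ : A.H 2)
    (e₁₂ e₂₃ e₃₄ e₄₅ e₅₁ : ↥(LinearMap.ker cup))
    (he₁₂ : (e₁₂ : SqM (A.H 2)) = sqm (A.H 2) x₁ x₂)
    (he₂₃ : (e₂₃ : SqM (A.H 2)) = sqm (A.H 2) x₂ x₃)
    (he₃₄ : (e₃₄ : SqM (A.H 2)) = sqm (A.H 2) x₃ x₄)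
    (he₄₅ : (e₄₅ : SqM (A.H 2)) = sqm (A.H 2) x₄ x₅)
    (he₅₁ : (e₅₁ : SqM (A.H 2)) = sqm (A.H 2) x₅ x₁)
    (σ₁ σ₂ : A.carrier) (hσ₁mem : σ₁ ∈ A.grading 4) (hσ₂mem : σ₂ ∈ A.grading 4)
    (hσ₁ : A.d σ₁ = (α x₁ : A.carrier) * γ e₂₃ - γ e₁₂ * (α x₃ : A.carrier))
    (hσ₂ : A.d σ₂ = (α x₂ : A.carrier) * γ e₃₄ - γ e₂₃ * (α x₄ : A.carrier))
    (c : A.carrier)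
    (hc : c = (α x₁ : A.carrier) * σ₂ - γ e₁₂ * γ e₃₄ + σ₁ * (α x₄ : A.carrier))
    (S : A.carrier)
    (hS : S = (α x₁ : A.carrier) * (γ e₂₃ * γ e₄₅)
        + (α x₂ : A.carrier) * (γ e₃₄ * γ e₅₁)
        + (α x₃ : A.carrier) * (γ e₄₅ * γ e₁₂)
        + (α x₄ : A.carrier) * (γ e₅₁ * γ e₂₃)
        + (α x₅ : A.carrier) * (γ e₁₂ * γ e₃₄))
    (st : A.H 2 ⊗[ℚ] AltM ↥(LinearMap.ker cup))
    (hst : st = x₁ ⊗ₜ[ℚ] wdg ↥(LinearMap.ker cup) e₂₃ e₄₅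
        + x₂ ⊗ₜ[ℚ] wdg ↥(LinearMap.ker cup) e₃₄ e₅₁
        + x₃ ⊗ₜ[ℚ] wdg ↥(LinearMap.ker cup) e₄₅ e₁₂
        + x₄ ⊗ₜ[ℚ] wdg ↥(LinearMap.ker cup) e₅₁ e₂₃
        + x₅ ⊗ₜ[ℚ] wdg ↥(LinearMap.ker cup) e₁₂ e₃₄) :
    c ∈ A.grading 6 ∧ A.d c = 0 ∧ m (ι st) = 0 ∧ Φ st = S ∧
      c * (α x₅ : A.carrier) + S ∈ Submodule.map A.d (A.grading 7) := by
  let x : Fin 5 → A.H 2 := ![x₅, x₁, x₂, x₃, x₄]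
  let e : Fin 5 → LinearMap.ker cup := ![e₅₁, e₁₂, e₂₃, e₃₄, e₄₅]
  have he (i : Fin 5) : (e i : SqM (A.H 2)) = sqm (A.H 2) (x i) (x (i + 1)) := by
    fin_cases i
    exacts [he₅₁, he₁₂, he₂₃, he₃₄, he₄₅]
  have hdγ (i : Fin 5) : A.d (γ (e i)) = (α (x i) : A.carrier) * α (x (i + 1)) := by
    rw [hγd, he, hαsq _ _ ⟨_, DGA.mul_mem_Z (α (x i)).2 (α (x (i + 1))).2⟩ rfl]
  have hα_even (y : A.H 2) : A.IsEven (α y : A.carrier) := ⟨2, by decide, (α y).2.1⟩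
  have hγ_odd (f : LinearMap.ker cup) : A.IsOdd (γ f) := ⟨3, by decide, hγmem f⟩
  have hσ₁_even : A.IsEven σ₁ := ⟨4, by decide, hσ₁mem⟩
  have hιst : ι st = star5 (A.H 2) x₁ x₂ x₃ x₄ x₅ := by
    simp only [hst, map_add, hι, he₁₂, he₂₃, he₃₄, he₄₅, he₅₁, star5]
  have hS_pentagon : S = DGA.pentagonSum (fun i => (α (x i) : A.carrier)) (fun i => γ (e i)) := by
    rw [DGA.pentagonSum_eq_add]
    exact hS
  refine ⟨?_, ?_, hιst ▸ map_star5_eq_zero m hm x₁ x₂ x₃ x₄ x₅,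
    by simp only [hst, hS, map_add, hΦ], γ e₅₁ * σ₂ + σ₁ * γ e₄₅,
    add_mem (A.mul_mem (hγmem _) hσ₂mem) (A.mul_mem hσ₁mem (hγmem _)), ?_⟩
  · exact hc ▸ add_mem (sub_mem (A.mul_mem (α x₁).2.1 hσ₂mem) (A.mul_mem (hγmem _) (hγmem _)))
      (A.mul_mem hσ₁mem (α x₄).2.1)
  · exact hc ▸ DGA.d_masseyCocycle_eq_zero (hα_even x₁) (hγ_odd e₁₂) hσ₁_even
      (α x₁).2.2 (α x₄).2.2 (hdγ 1) (hdγ 3) hσ₁ hσ₂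
  · rw [hc, hS_pentagon]
    exact DGA.d_eq_masseyCocycle_mul_add_pentagonSum (fun i => hα_even (x i))
      (fun i => hγ_odd (e i)) hσ₁_even hdγ hσ₁ hσ₂

end
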